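/- arXiv:2405.04047 — 3 statements merged into one kernel-verified Lean document; each statement's English description precedes it below -/
import Mathlib

section
/- For every r ∈ [0, ℓ0] one has ψ(r) ≤ −σ²·c1²·exp(−c1·r) ≤ −σ²·c1·c2, and consequently ψ(r) ≤ −(c1·c2·σ² / (1 − exp(−c1·ℓ0) + c2·ℓ0))·f(r). -/
/-!
Write `g r = c e^{-cr}` for the slope of the exponential part of `f`. Since the affine part has
slope `g ℓ`, on `r ≤ ℓ` one has `f' = g r + g ℓ ≤ 2 g r`, while `f'' = -c g r`. The constant `c` is
chosen so that the drift is at most `c σ² / 2` there; hence the drift contributes at most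
`c σ² g r`, which is half of what the diffusion term `2 σ² f'' = -2 c σ² g r` takes away. As
`f ≤ f ℓ` on this range, the remaining `-c σ² g r ≤ -c σ² g ℓ` is at most `-(c σ² g ℓ / f ℓ) f r`.
-/

/-- The concave function of the distance `r` used to measure contraction of a reflection coupling:
an exponentially saturating part plus an affine part. The slope `c e^{-cℓ}` of the affine part is
the slope of the exponential part at the range `ℓ`; it is the constant `c₂` when `c = c₁`. -/
noncomputable def concaveDist (c ℓ r : ℝ) : ℝ :=
  1 - Real.exp (-c * r) + c * Real.exp (-c * ℓ) * r

section concaveDist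

variable {c ℓ r b σ : ℝ}

@[simp]
lemma concaveDist_zero : concaveDist c ℓ 0 = 0 := by
  simp [concaveDist]

lemma hasDerivAt_exp_neg_mul (c r : ℝ) :
    HasDerivAt (fun x ↦ Real.exp (-c * x)) (-c * Real.exp (-c * r)) r := by
  simpa [mul_comm] using ((hasDerivAt_id r).const_mul (-c)).exp

lemma deriv_concaveDist :
    deriv (concaveDist c ℓ) = fun r ↦ c * Real.exp (-c * r) + c * Real.exp (-c * ℓ) := by
  ext r
  have h : HasDerivAt (concaveDist c ℓ) _ r := ((hasDerivAt_exp_neg_mul c r).const_sub 1).add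
    ((hasDerivAt_id r).const_mul (c * Real.exp (-c * ℓ)))
  rw [h.deriv]
  ring

lemma deriv_deriv_concaveDist :
    deriv (deriv (concaveDist c ℓ)) r = -c ^ 2 * Real.exp (-c * r) := by
  rw [deriv_concaveDist]
  have h := ((hasDerivAt_exp_neg_mul c r).const_mul c).add_const (c * Real.exp (-c * ℓ))
  rw [h.deriv]
  ring

lemma strictMono_concaveDist (hc : 0 < c) : StrictMono (concaveDist c ℓ) := by
  refine strictMono_of_deriv_pos fun r ↦ ?_
  rw [deriv_concaveDist]
  positivity

lemma concaveDist_pos (hc : 0 < c) (hr : 0 < r) : 0 < concaveDist c ℓ r := by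
  simpa using strictMono_concaveDist (ℓ := ℓ) hc hr

lemma antitone_exp_neg_mul (hc : 0 ≤ c) : Antitone fun r ↦ Real.exp (-c * r) :=
  fun _ _ hrs ↦ Real.exp_le_exp.mpr (mul_le_mul_of_nonpos_left hrs (neg_nonpos.mpr hc))

lemma deriv_concaveDist_nonneg (hc : 0 ≤ c) : 0 ≤ deriv (concaveDist c ℓ) r := by
  rw [deriv_concaveDist]
  positivity

lemma deriv_concaveDist_le (hc : 0 ≤ c) (hr : r ≤ ℓ) :
    deriv (concaveDist c ℓ) r ≤ 2 * (c * Real.exp (-c * r)) := by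
  have hslope := mul_le_mul_of_nonneg_left (antitone_exp_neg_mul hc hr) hc
  rw [deriv_concaveDist]
  linarith

lemma drift_add_diffusion_concaveDist_le (hc : 0 ≤ c) (hr : r ≤ ℓ) (hb : b ≤ c * σ ^ 2 / 2) :
    deriv (concaveDist c ℓ) r * b + 2 * σ ^ 2 * deriv (deriv (concaveDist c ℓ)) r ≤
      -σ ^ 2 * c ^ 2 * Real.exp (-c * r) := by
  have hdrift : deriv (concaveDist c ℓ) r * b ≤ σ ^ 2 * c ^ 2 * Real.exp (-c * r) := calc
    _ ≤ deriv (concaveDist c ℓ) r * (c * σ ^ 2 / 2) :=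
      mul_le_mul_of_nonneg_left hb (deriv_concaveDist_nonneg hc)
    _ ≤ 2 * (c * Real.exp (-c * r)) * (c * σ ^ 2 / 2) :=
      mul_le_mul_of_nonneg_right (deriv_concaveDist_le hc hr) (by positivity)
    _ = _ := by ring
  rw [deriv_deriv_concaveDist]
  linarith

lemma neg_sq_mul_exp_neg_mul_le (hc : 0 ≤ c) (hr : r ≤ ℓ) :
    -σ ^ 2 * c ^ 2 * Real.exp (-c * r) ≤ -σ ^ 2 * c * (c * Real.exp (-c * ℓ)) := by
  have h := mul_le_mul_of_nonneg_left (antitone_exp_neg_mul hc hr)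
    (by positivity : 0 ≤ σ ^ 2 * c ^ 2)
  linarith

end concaveDist

lemma neg_le_neg_div_mul {a x y : ℝ} (ha : 0 ≤ a) (hy : 0 < y) (hxy : x ≤ y) :
    -a ≤ -(a / y) * x := by
  rw [neg_mul, neg_le_neg_iff, div_mul_eq_mul_div, div_le_iff₀ hy]
  exact mul_le_mul_of_nonneg_left hxy ha

theorem stmt_1_general
    (l0 sigma K L lam : ℝ) (φ : ℝ → ℝ)
    (hl0 : 0 < l0) (hsigma : sigma ≠ 0) (hKL : 0 ≤ L + 2 * K)
    (c1 c2 : ℝ) (f ψ : ℝ → ℝ)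
    (hc1 : c1 = (2 * φ l0 + (L + 2 * K) * l0) / sigma ^ 2)
    (hc1pos : 0 < c1)
    (hc2 : c2 = c1 * Real.exp (-c1 * l0))
    (hf : ∀ r, f r = 1 - Real.exp (-c1 * r) + c2 * r)
    (hψ : ∀ r, ψ r =
      (c1 * Real.exp (-c1 * r) + c2) *
        ((if r ≤ l0 then φ r + lam * r else 0) - (lam - K - L / 2) * r)
      + 2 * sigma ^ 2 * (-(c1 ^ 2) * Real.exp (-c1 * r)))
    (r : ℝ) (hr : r ≤ l0) (hφr : φ r ≤ φ l0) :
    ψ r ≤ -(sigma ^ 2) * c1 ^ 2 * Real.exp (-c1 * r) ∧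
    -(sigma ^ 2) * c1 ^ 2 * Real.exp (-c1 * r) ≤ -(sigma ^ 2) * c1 * c2 ∧
    ψ r ≤ -(c1 * c2 * sigma ^ 2 / (1 - Real.exp (-c1 * l0) + c2 * l0)) * f r := by
  subst hc2
  have hdrift : φ r + lam * r - (lam - K - L / 2) * r ≤ c1 * sigma ^ 2 / 2 := by
    have hc1σ : c1 * sigma ^ 2 = 2 * φ l0 + (L + 2 * K) * l0 :=
      (eq_div_iff (pow_ne_zero 2 hsigma)).mp hc1
    linarith [mul_le_mul_of_nonneg_left hr hKL]
  have hψ_le : ψ r ≤ -(sigma ^ 2) * c1 ^ 2 * Real.exp (-c1 * r) := by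
    have h := drift_add_diffusion_concaveDist_le hc1pos.le hr hdrift
    rw [deriv_deriv_concaveDist, deriv_concaveDist] at h
    rwa [hψ r, if_pos hr]
  have hexp_le := neg_sq_mul_exp_neg_mul_le (σ := sigma) hc1pos.le hr
  have hcontract : -(c1 * (c1 * Real.exp (-c1 * l0)) * sigma ^ 2) ≤
      -(c1 * (c1 * Real.exp (-c1 * l0)) * sigma ^ 2 / concaveDist c1 l0 l0) *
        concaveDist c1 l0 r :=
    neg_le_neg_div_mul (by positivity) (concaveDist_pos hc1pos hl0)
      ((strictMono_concaveDist hc1pos).monotone hr)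
  refine ⟨hψ_le, hexp_le, ?_⟩
  rw [hf r]
  exact (hψ_le.trans hexp_le).trans (le_of_eq_of_le (by ring) hcontract)

/- Short-range estimate: for r ∈ [0, ℓ0],
   ψ(r) ≤ −σ²·c1²·exp(−c1·r) ≤ −σ²·c1·c2, and consequently
   ψ(r) ≤ −(c1·c2·σ² / (1 − exp(−c1·ℓ0) + c2·ℓ0))·f(r). -/
theorem stmt_1
    (l0 sigma K L lam : ℝ) (φ : ℝ → ℝ)
    (hl0 : 0 < l0) (hsigma : sigma ≠ 0) (hK : 0 ≤ K) (hL : 0 ≤ L)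
    (hlam : K + L / 2 < lam)
    (hφ0 : φ 0 = 0) (hφmono : MonotoneOn φ (Set.Ici 0))
    (hφcont : ContinuousOn φ (Set.Ici 0))
    (hφnonneg : ∀ r, 0 ≤ r → 0 ≤ φ r)
    (c1 c2 : ℝ) (f ψ : ℝ → ℝ)
    (hc1 : c1 = (2 * φ l0 + (L + 2 * K) * l0) / sigma ^ 2)
    (hc1pos : 0 < c1)
    (hc2 : c2 = c1 * Real.exp (-c1 * l0))
    (hf : ∀ r, f r = 1 - Real.exp (-c1 * r) + c2 * r)
    (hψ : ∀ r, ψ r =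
      (c1 * Real.exp (-c1 * r) + c2) *
        ((if r ≤ l0 then φ r + lam * r else 0) - (lam - K - L / 2) * r)
      + 2 * sigma ^ 2 * (-(c1 ^ 2) * Real.exp (-c1 * r))) :
    ∀ r, 0 ≤ r → r ≤ l0 →
      ψ r ≤ -(sigma ^ 2) * c1 ^ 2 * Real.exp (-c1 * r) ∧
      -(sigma ^ 2) * c1 ^ 2 * Real.exp (-c1 * r) ≤ -(sigma ^ 2) * c1 * c2 ∧
      ψ r ≤ -(c1 * c2 * sigma ^ 2 / (1 - Real.exp (-c1 * l0) + c2 * l0)) * f r := by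
  intro r hr hrl
  exact stmt_1_general l0 sigma K L lam φ hl0 hsigma (by positivity) c1 c2 f ψ hc1 hc1pos hc2 hf hψ
    r hrl (hφmono hr hl0.le hrl)
end

section
/- Assume b1 satisfies condition (B1) with rate φ and constants ℓ0 ≥ 0, λ > 0, b0 satisfies condition (B2) with constant K ≥ 0, and λ > 2K. Then there exists a constant C0 > 0 such that for every x ∈ ℝ^d and every Borel probability measure μ on ℝ^d with finite second moment, ⟨x, b(x, μ)⟩ ≤ C0 − (1/4)·(3λ − 4K)·|x|² + (1/2)·K·∫_{ℝ^d} |y|² μ(dy). -/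
open MeasureTheory
open scoped RealInnerProductSpace

/-!
Comparing `x` with the origin in (B1) gives `⟪x, b1 x⟫ ≤ C + ‖b1 0‖ |x| - λ |x|²`. By the Lipschitz
bound, `⟪x, b0 (x - y)⟫ ≤ ‖b0 0‖ |x| + K |x|² + K |x| |y|`, and `|x| |y| ≤ (|x|² + |y|²) / 2` turns
this, after integration in `y`, into `‖b0 0‖ |x| + (3/2) K |x|² + (1/2) K ∫ |y|²`. The coefficients
of `|x|²` sum to `-(3λ - 4K) / 4 - (λ - 2K) / 4`, so the surplus `(λ - 2K) / 4` absorbs the terms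
linear in `|x|`.
-/

section PartialDissipativity

variable {E : Type*} [NormedAddCommGroup E] [InnerProductSpace ℝ E]

/-- Condition (B1): the vector field `b` is dissipative with constant `lam` at distances larger than
`l0`, while at distances up to `l0` its one-sided modulus is only controlled by the rate `φ`. -/
def IsPartiallyDissipative (b : E → E) (φ : ℝ → ℝ) (l0 lam : ℝ) : Prop :=
  ∀ x y, ⟪x - y, b x - b y⟫ ≤
    if ‖x - y‖ ≤ l0 then ‖x - y‖ * φ ‖x - y‖ else -(lam * ‖x - y‖ ^ 2)

variable {b : E → E} {φ : ℝ → ℝ} {l0 lam : ℝ}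

theorem IsPartiallyDissipative.exists_inner_sub_le
    (hb : IsPartiallyDissipative b φ l0 lam) (hφ : BddAbove (φ '' Set.Icc 0 l0)) :
    ∃ C, ∀ x y, ⟪x - y, b x - b y⟫ ≤ C - lam * ‖x - y‖ ^ 2 := by
  obtain ⟨M, hM⟩ := hφ
  refine ⟨l0 ^ 2 * |lam| + |l0| * |M|, fun x y ↦ (hb x y).trans ?_⟩
  have hr : 0 ≤ ‖x - y‖ := norm_nonneg _
  generalize ‖x - y‖ = r at hr ⊢
  split_ifs with hrl
  · have hrl' : r ≤ |l0| := hrl.trans (le_abs_self l0)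
    have hφr : φ r ≤ |M| := (hM ⟨r, ⟨hr, hrl⟩, rfl⟩).trans (le_abs_self M)
    have rate_le : r * φ r ≤ |l0| * |M| :=
      (mul_le_mul_of_nonneg_left hφr hr).trans (by gcongr)
    have sq_le : r ^ 2 * lam ≤ l0 ^ 2 * |lam| :=
      (mul_le_mul_of_nonneg_left (le_abs_self lam) (sq_nonneg r)).trans (by gcongr)
    linarith
  · have : 0 ≤ l0 ^ 2 * |lam| + |l0| * |M| := by positivity
    linarith

theorem IsPartiallyDissipative.exists_inner_self_le
    (hb : IsPartiallyDissipative b φ l0 lam) (hφ : BddAbove (φ '' Set.Icc 0 l0)) :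
    ∃ C, 0 ≤ C ∧ ∀ x, ⟪x, b x⟫ ≤ C + ‖b 0‖ * ‖x‖ - lam * ‖x‖ ^ 2 := by
  obtain ⟨C, hC⟩ := hb.exists_inner_sub_le hφ
  refine ⟨C, by simpa using hC 0 0, fun x ↦ ?_⟩
  have hx : ⟪x, b x⟫ - ⟪x, b 0⟫ ≤ C - lam * ‖x‖ ^ 2 := by
    simpa only [sub_zero, inner_sub_right] using hC x 0
  linarith [real_inner_le_norm x (b 0)]

end PartialDissipativity

section Lipschitz

open scoped NNReal

variable {K : ℝ≥0}

theorem norm_apply_le_of_lipschitzWith {E F : Type*} [SeminormedAddCommGroup E]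
    [SeminormedAddCommGroup F] {f : E → F} (hf : LipschitzWith K f) (x : E) :
    ‖f x‖ ≤ ‖f 0‖ + K * ‖x‖ :=
  calc ‖f x‖ ≤ ‖f 0‖ + ‖f x - f 0‖ := norm_le_norm_add_norm_sub' _ _
    _ ≤ ‖f 0‖ + K * ‖x‖ := by simpa using hf.norm_sub_le x 0

theorem integrable_comp_of_lipschitzWith {Ω E F : Type*} [MeasurableSpace Ω] {μ : Measure Ω}
    [IsFiniteMeasure μ] [NormedAddCommGroup E] [NormedAddCommGroup F] {f : E → F} {g : Ω → E}
    (hf : LipschitzWith K f) (hg : Integrable g μ) : Integrable (fun ω ↦ f (g ω)) μ :=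
  ((integrable_const ‖f 0‖).add (hg.norm.const_mul (K : ℝ))).mono'
    (hf.continuous.comp_aestronglyMeasurable hg.aestronglyMeasurable)
    (.of_forall fun ω ↦ norm_apply_le_of_lipschitzWith hf (g ω))

variable {E : Type*} [NormedAddCommGroup E] [InnerProductSpace ℝ E] {f : E → E}

theorem inner_apply_sub_le_of_lipschitzWith (hf : LipschitzWith K f) (x y : E) :
    ⟪x, f (x - y)⟫ ≤ ‖f 0‖ * ‖x‖ + 3 / 2 * K * ‖x‖ ^ 2 + 1 / 2 * K * ‖y‖ ^ 2 :=
  calc ⟪x, f (x - y)⟫ ≤ ‖x‖ * ‖f (x - y)‖ := real_inner_le_norm _ _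
    _ ≤ ‖x‖ * (‖f 0‖ + K * (‖x‖ + ‖y‖)) := by
      gcongr
      exact (norm_apply_le_of_lipschitzWith hf _).trans (by gcongr; exact norm_sub_le x y)
    _ = ‖f 0‖ * ‖x‖ + K * ‖x‖ ^ 2 + K / 2 * (2 * ‖x‖ * ‖y‖) := by ring
    _ ≤ ‖f 0‖ * ‖x‖ + K * ‖x‖ ^ 2 + K / 2 * (‖x‖ ^ 2 + ‖y‖ ^ 2) := by
      gcongr
      exact two_mul_le_add_sq _ _
    _ = ‖f 0‖ * ‖x‖ + 3 / 2 * K * ‖x‖ ^ 2 + 1 / 2 * K * ‖y‖ ^ 2 := by ring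

variable [CompleteSpace E] [SecondCountableTopology E] [MeasurableSpace E] [OpensMeasurableSpace E]

theorem inner_integral_sub_le_of_lipschitzWith (hf : LipschitzWith K f) (x : E) {μ : Measure E}
    [IsProbabilityMeasure μ] (hμ : Integrable (fun y ↦ ‖y‖ ^ 2) μ) :
    ⟪x, ∫ y, f (x - y) ∂μ⟫ ≤
      ‖f 0‖ * ‖x‖ + 3 / 2 * K * ‖x‖ ^ 2 + 1 / 2 * K * ∫ y, ‖y‖ ^ 2 ∂μ := by
  have integrable_id : Integrable id μ :=
    ((memLp_two_iff_integrable_sq_norm aestronglyMeasurable_id).2 hμ).integrable one_le_two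
  have integrable_f : Integrable (fun y ↦ f (x - y)) μ :=
    integrable_comp_of_lipschitzWith hf ((integrable_const x).sub integrable_id)
  have integrable_sq : Integrable (fun y ↦ 1 / 2 * (K : ℝ) * ‖y‖ ^ 2) μ := hμ.const_mul _
  calc ⟪x, ∫ y, f (x - y) ∂μ⟫ = ∫ y, ⟪x, f (x - y)⟫ ∂μ := (integral_inner integrable_f x).symm
    _ ≤ ∫ y, (‖f 0‖ * ‖x‖ + 3 / 2 * K * ‖x‖ ^ 2 + 1 / 2 * K * ‖y‖ ^ 2) ∂μ :=
      integral_mono (integrable_f.const_inner x) ((integrable_const _).add integrable_sq)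
        (inner_apply_sub_le_of_lipschitzWith hf x)
    _ = ‖f 0‖ * ‖x‖ + 3 / 2 * K * ‖x‖ ^ 2 + 1 / 2 * K * ∫ y, ‖y‖ ^ 2 ∂μ := by
      rw [integral_add (integrable_const _) integrable_sq, integral_const_mul, integral_const,
        probReal_univ, one_smul]

theorem stmt_6_general {b1 b0 : E → E} {φ : ℝ → ℝ} {l0 lam : ℝ} (hlamK : 2 * K < lam)
    (hφ : BddAbove (φ '' Set.Icc 0 l0)) (hb1 : IsPartiallyDissipative b1 φ l0 lam)
    (hb0 : LipschitzWith K b0) :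
    ∃ C0 : ℝ, 0 < C0 ∧ ∀ (x : E) (μ : Measure E),
      IsProbabilityMeasure μ → Integrable (fun y ↦ ‖y‖ ^ 2) μ →
      ⟪x, b1 x + ∫ y, b0 (x - y) ∂μ⟫ ≤
        C0 - 1 / 4 * (3 * lam - 4 * K) * ‖x‖ ^ 2 + 1 / 2 * K * ∫ y, ‖y‖ ^ 2 ∂μ := by
  obtain ⟨C, hC, confinement⟩ := hb1.exists_inner_self_le hφ
  obtain ⟨ε, hε, rfl⟩ : ∃ ε, 0 < ε ∧ lam = 2 * K + 2 * ε :=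
    ⟨(lam - 2 * K) / 2, by linarith, by ring⟩
  refine ⟨C + ε⁻¹ * (‖b1 0‖ + ‖b0 0‖) ^ 2 / 2 + 1, by positivity, fun x μ _ hμ ↦ ?_⟩
  have interaction := inner_integral_sub_le_of_lipschitzWith hb0 x hμ
  have absorb_linear :
      2 * ‖x‖ * (‖b1 0‖ + ‖b0 0‖) ≤ ε * ‖x‖ ^ 2 + ε⁻¹ * (‖b1 0‖ + ‖b0 0‖) ^ 2 :=
    two_mul_le_add_mul_sq hε
  rw [inner_add_right]
  linarith [confinement x]

end Lipschitz

/- Quantified drift dissipativity (T10): under (B1), (B2) and λ > 2K, there is C0 > 0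
   with ⟨x, b(x,μ)⟩ ≤ C0 − (1/4)(3λ − 4K)|x|² + (1/2)K·μ(|·|²) for all x and all
   probability measures μ with finite second moment. -/
theorem stmt_6 (d : ℕ) (hd : 1 ≤ d)
    (b1 b0 : EuclideanSpace ℝ (Fin d) → EuclideanSpace ℝ (Fin d))
    (hb1m : Measurable b1) (hb0m : Measurable b0)
    (φ : ℝ → ℝ) (l0 lam K : ℝ)
    (hl0 : 0 ≤ l0) (hlam : 0 < lam) (hK : 0 ≤ K) (hlamK : 2 * K < lam)
    (hφ0 : φ 0 = 0) (hφmono : MonotoneOn φ (Set.Ici 0))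
    (hφnonneg : ∀ r, 0 ≤ r → 0 ≤ φ r)
    (hB1 : ∀ x y : EuclideanSpace ℝ (Fin d),
      ⟪x - y, b1 x - b1 y⟫ ≤
        (if ‖x - y‖ ≤ l0 then ‖x - y‖ * φ ‖x - y‖ else -(lam * ‖x - y‖ ^ 2)))
    (hB2 : ∀ x y : EuclideanSpace ℝ (Fin d), ‖b0 x - b0 y‖ ≤ K * ‖x - y‖) :
    ∃ C0 : ℝ, 0 < C0 ∧
      ∀ (x : EuclideanSpace ℝ (Fin d)) (μ : Measure (EuclideanSpace ℝ (Fin d))),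
        IsProbabilityMeasure μ → Integrable (fun y => ‖y‖ ^ 2) μ →
        ⟪x, b1 x + ∫ y, b0 (x - y) ∂μ⟫ ≤
          C0 - (1 / 4) * (3 * lam - 4 * K) * ‖x‖ ^ 2
            + (1 / 2) * K * ∫ y, ‖y‖ ^ 2 ∂μ := by
  lift K to NNReal using hK
  exact stmt_6_general hlamK ⟨φ l0, Set.forall_mem_image.2 fun r hr ↦ hφmono hr.1 hl0 hr.2⟩ hB1
    (LipschitzWith.of_dist_le_mul (by simpa only [dist_eq_norm] using hB2))
end

section
/- There exist constants δ* ∈ (0, 1] and C* > 0 such that for every δ ∈ (0, δ*], every x ∈ ℝ^d, and every Borel probability measure μ on ℝ^d with finite second moment, the tamed Euler drift step satisfies |x + δ·(b1^δ(x) + ∫_{ℝ^d} b0(x − y) μ(dy))|² ≤ (1 − (κ/4 + β_δ)·δ)·|x|² + β_δ·δ·∫_{ℝ^d} |y|² μ(dy) + C*·δ, where β_δ := K + ρ·√δ and ρ := 4K·(K + λ̂_{b1}). -/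
open MeasureTheory
open scoped RealInnerProductSpace

/-- Hilbert–Schmidt (Frobenius) norm of the Jacobian matrix of `b` at `x`. -/
noncomputable def jacobianHSNorm {d : ℕ}
    (b : EuclideanSpace ℝ (Fin d) → EuclideanSpace ℝ (Fin d))
    (x : EuclideanSpace ℝ (Fin d)) : ℝ :=
  Real.sqrt (∑ i : Fin d, ∑ j : Fin d,
    (fderiv ℝ b x (EuclideanSpace.single j (1 : ℝ)) i) ^ 2)

/-!
Write `s = √δ`, `r = ‖x‖`, and `P = g / (1 + s g)` for the tamed weight. Taming replaces `g` by `P`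
in the dissipativity and growth bounds for `b1`, and `s P ≤ 1` gives
`δ (lamhat r P)² ≤ s lamhat² P r²`: the quadratic part of the increment costs only a fraction `O(s)`
of the dissipation `2 lam P r²`. Outside the ball of radius `R` one has `P ≥ α / (1 + s α)`, so what
is left of the dissipation is at least `(2 lam α - O(s)) r²`, while the interaction and a decay rate
`γ` need only `(4 K + γ + η + O(s)) r²` with `η > 0` as small as one likes. Hence any rate
`γ < 2 (α lam - 2 K)` is reached for small `δ`; inside the ball everything is bounded by a constant.
-/

open Filter Topology

section TamedWeight

/-- The tamed weight `g / (1 + s g)`, with `s` standing for `√δ`: multiplying a vector field by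
`(1 + s g)⁻¹` turns the weight `g` in its dissipativity and growth bounds into this one. -/
noncomputable def tamedWeight (s g : ℝ) : ℝ := g / (1 + s * g)

variable {s g : ℝ}

lemma tamedWeight_nonneg (hs : 0 ≤ s) (hg : 0 ≤ g) : 0 ≤ tamedWeight s g := by
  unfold tamedWeight
  positivity

lemma tamedWeight_pos (hs : 0 ≤ s) (hg : 0 < g) : 0 < tamedWeight s g := by
  unfold tamedWeight
  positivity

lemma mul_tamedWeight_le_one (hs : 0 ≤ s) (hg : 0 ≤ g) : s * tamedWeight s g ≤ 1 := by
  rw [tamedWeight, ← mul_div_assoc]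
  exact div_le_one_of_le₀ (by linarith) (by positivity)

lemma tamedWeight_le_tamedWeight {α : ℝ} (hs : 0 ≤ s) (hα : 0 ≤ α) (hαg : α ≤ g) :
    tamedWeight s α ≤ tamedWeight s g := by
  have hg : 0 ≤ g := hα.trans hαg
  rw [tamedWeight, tamedWeight, div_le_div_iff₀ (by positivity) (by positivity)]
  linarith

lemma inv_one_add_mul_mul_le {a y C : ℝ} (hs : 0 ≤ s) (hg : 0 ≤ g) (hC : 0 ≤ C)
    (hy : y ≤ a * g + C) : (1 + s * g)⁻¹ * y ≤ a * tamedWeight s g + C := by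
  have hsg : 0 ≤ s * g := mul_nonneg hs hg
  calc (1 + s * g)⁻¹ * y ≤ (1 + s * g)⁻¹ * (a * g + C) := by gcongr
    _ = a * tamedWeight s g + (1 + s * g)⁻¹ * C := by rw [tamedWeight]; ring
    _ ≤ a * tamedWeight s g + C := by
      gcongr
      exact mul_le_of_le_one_left hC (inv_le_one_of_one_le₀ (by linarith))

lemma sq_mul_add_sq_le {P a w : ℝ} (hs : 0 ≤ s) (hs1 : s ≤ 1) (hP : 0 ≤ P) (hsP : s * P ≤ 1)
    (ha : 0 ≤ a) (hw : 0 ≤ w) :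
    s ^ 2 * (a * P + w) ^ 2 ≤ s * (a ^ 2 * P + 2 * a * w + w ^ 2) := by
  calc s ^ 2 * (a * P + w) ^ 2
      = s * ((s * P) * (a ^ 2 * P) + (s * P) * (2 * a * w) + s * w ^ 2) := by ring
    _ ≤ s * (1 * (a ^ 2 * P) + 1 * (2 * a * w) + 1 * w ^ 2) := by gcongr
    _ = s * (a ^ 2 * P + 2 * a * w + w ^ 2) := by ring

lemma eventually_lt_mul_tamedWeight {a c α : ℝ} (A B : ℝ) (h : c < a * α) :
    ∀ᶠ s in 𝓝 (0 : ℝ), c + s * A < (a - s * B) * tamedWeight s α := by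
  have hcont : ContinuousAt (fun s : ℝ => (a - s * B) * tamedWeight s α) 0 := by
    unfold tamedWeight
    fun_prop (disch := simp)
  exact ContinuousAt.eventually_lt (by fun_prop) hcont (by simpa [tamedWeight] using h)

lemma mul_sq_le_mul_tamedWeight_mul_sq_add {a c α r R : ℝ} (hs : 0 ≤ s) (hg : 0 ≤ g) (hα : 0 < α)
    (hc : 0 ≤ c) (hr : 0 ≤ r) (hlower : R ≤ r → α ≤ g) (h : c ≤ a * tamedWeight s α) :
    c * r ^ 2 ≤ a * tamedWeight s g * r ^ 2 + c * R ^ 2 := by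
  have ha : 0 ≤ a := nonneg_of_mul_nonneg_left (hc.trans h) (tamedWeight_pos hs hα)
  have hP : 0 ≤ tamedWeight s g := tamedWeight_nonneg hs hg
  rcases le_or_gt R r with houter | hinner
  · have hweight : c ≤ a * tamedWeight s g :=
      h.trans (by gcongr; exact tamedWeight_le_tamedWeight hs hα.le (hlower houter))
    calc c * r ^ 2 ≤ a * tamedWeight s g * r ^ 2 := by gcongr
      _ ≤ a * tamedWeight s g * r ^ 2 + c * R ^ 2 := le_add_of_nonneg_right (by positivity)
  · calc c * r ^ 2 ≤ c * R ^ 2 := by gcongr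
      _ ≤ a * tamedWeight s g * r ^ 2 + c * R ^ 2 := le_add_of_nonneg_left (by positivity)

end TamedWeight

lemma exists_forall_sqrt_of_eventually {p : ℝ → Prop} (hp : ∀ᶠ s in 𝓝 (0 : ℝ), p s) :
    ∃ δ₀ : ℝ, 0 < δ₀ ∧ δ₀ ≤ 1 ∧ ∀ δ, 0 < δ → δ ≤ δ₀ → p (√δ) := by
  have hsqrt : Tendsto (√·) (𝓝[>] 0) (𝓝 (0 : ℝ)) :=
    (Real.continuous_sqrt.tendsto' 0 0 Real.sqrt_zero).mono_left nhdsWithin_le_nhds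
  obtain ⟨u, hu, hsub⟩ := mem_nhdsGT_iff_exists_Ioc_subset.1 (hsqrt.eventually hp)
  exact ⟨min u 1, lt_min hu one_pos, min_le_right _ _,
    fun δ hδ hle => hsub ⟨hδ, hle.trans (min_le_left _ _)⟩⟩

lemma two_mul_mul_le_mul_sq_add_sq_div {ε : ℝ} (hε : 0 < ε) (a b : ℝ) :
    2 * a * b ≤ ε * b ^ 2 + a ^ 2 / ε := by
  have hsq : ε * b ^ 2 + a ^ 2 / ε - 2 * a * b = (ε * b - a) ^ 2 / ε := by
    field_simp
    ring
  have hnonneg : 0 ≤ (ε * b - a) ^ 2 / ε := by positivity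
  linarith

section LinearGrowth

variable {K m M : ℝ}

lemma two_mul_mul_add_mul_add_le (hK : 0 ≤ K) (hmM : m ^ 2 ≤ M) (c r : ℝ) :
    2 * r * (c + K * (r + m)) ≤ 3 * K * r ^ 2 + K * M + 2 * c * r := by
  have hrm : K * (2 * r * m) ≤ K * (r ^ 2 + M) :=
    mul_le_mul_of_nonneg_left ((two_mul_le_add_sq r m).trans (by gcongr)) hK
  linarith

lemma add_mul_add_sq_le (hmM : m ^ 2 ≤ M) (c r : ℝ) :
    (c + K * (r + m)) ^ 2 ≤ 4 * c ^ 2 + 4 * K ^ 2 * r ^ 2 + 2 * K ^ 2 * M := by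
  calc (c + K * (r + m)) ^ 2 = ((c + K * r) + K * m) ^ 2 := by ring
    _ ≤ 2 * ((c + K * r) ^ 2 + (K * m) ^ 2) := add_sq_le
    _ ≤ 2 * (2 * (c ^ 2 + (K * r) ^ 2) + K ^ 2 * M) := by
      rw [mul_pow K m]
      gcongr
      exact add_sq_le
    _ = 4 * c ^ 2 + 4 * K ^ 2 * r ^ 2 + 2 * K ^ 2 * M := by ring

end LinearGrowth

section SecondMoment

variable {E : Type*} [NormedAddCommGroup E] [MeasurableSpace E] {μ : Measure E}
  [IsProbabilityMeasure μ]

lemma norm_integral_comp_sub_le_of_linear_growth {F : Type*} [NormedAddCommGroup F]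
    [NormedSpace ℝ F] {f : E → F} {c K : ℝ} (hK : 0 ≤ K) (hf : ∀ z, ‖f z‖ ≤ c + K * ‖z‖)
    (h : Integrable (fun y => ‖y‖) μ) (x : E) :
    ‖∫ y, f (x - y) ∂μ‖ ≤ c + K * (‖x‖ + ∫ y, ‖y‖ ∂μ) := by
  have hbound (y : E) : ‖f (x - y)‖ ≤ c + K * (‖x‖ + ‖y‖) :=
    (hf (x - y)).trans (by gcongr; exact norm_sub_le x y)
  have hint : Integrable (fun y => ‖x‖ + ‖y‖) μ := (integrable_const _).add h
  calc ‖∫ y, f (x - y) ∂μ‖ ≤ ∫ y, (c + K * (‖x‖ + ‖y‖)) ∂μ :=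
        norm_integral_le_of_norm_le ((integrable_const _).add (hint.const_mul K))
          (ae_of_all _ hbound)
    _ = c + K * (‖x‖ + ∫ y, ‖y‖ ∂μ) := by
      rw [integral_add (integrable_const _) (hint.const_mul K), integral_const_mul,
        integral_add (integrable_const _) h]
      simp

variable [OpensMeasurableSpace E]

lemma integrable_norm_of_integrable_norm_sq (h : Integrable (fun y => ‖y‖ ^ 2) μ) :
    Integrable (fun y => ‖y‖) μ :=
  ((memLp_two_iff_integrable_sq continuous_norm.aestronglyMeasurable).2 h).integrable one_le_two

lemma sq_integral_norm_le_integral_norm_sq (h : Integrable (fun y => ‖y‖ ^ 2) μ) :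
    (∫ y, ‖y‖ ∂μ) ^ 2 ≤ ∫ y, ‖y‖ ^ 2 ∂μ :=
  even_two.convexOn_pow.map_integral_le (continuous_pow 2).continuousOn isClosed_univ
    (by simp) (integrable_norm_of_integrable_norm_sq h) h

end SecondMoment

section OneStep

variable {E : Type*} [NormedAddCommGroup E] [InnerProductSpace ℝ E]
  {x v w : E} {s g lam lamhat C Chat c K m M : ℝ}

lemma two_mul_inner_tamed_add_le (hs : 0 ≤ s) (hg : 0 ≤ g) (hC : 0 ≤ C) (hK : 0 ≤ K)
    (hmM : m ^ 2 ≤ M) (hdiss : ⟪x, v⟫ ≤ -lam * ‖x‖ ^ 2 * g + C)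
    (hw : ‖w‖ ≤ c + K * (‖x‖ + m)) :
    2 * ⟪x, (1 + s * g)⁻¹ • v + w⟫ ≤
      -2 * lam * tamedWeight s g * ‖x‖ ^ 2 + 2 * C
        + (3 * K * ‖x‖ ^ 2 + K * M + 2 * c * ‖x‖) := by
  have htamed : ⟪x, (1 + s * g)⁻¹ • v⟫ ≤ -lam * ‖x‖ ^ 2 * tamedWeight s g + C := by
    rw [real_inner_smul_right]
    exact inv_one_add_mul_mul_le hs hg hC hdiss
  have hinteraction : 2 * ⟪x, w⟫ ≤ 3 * K * ‖x‖ ^ 2 + K * M + 2 * c * ‖x‖ :=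
    calc 2 * ⟪x, w⟫ ≤ 2 * (‖x‖ * (c + K * (‖x‖ + m))) := by
          gcongr
          exact (real_inner_le_norm x w).trans (by gcongr)
      _ = 2 * ‖x‖ * (c + K * (‖x‖ + m)) := by ring
      _ ≤ 3 * K * ‖x‖ ^ 2 + K * M + 2 * c * ‖x‖ := two_mul_mul_add_mul_add_le hK hmM c ‖x‖
  rw [inner_add_right]
  linarith

lemma norm_tamed_add_le (hs : 0 ≤ s) (hg : 0 ≤ g) (hChat : 0 ≤ Chat)
    (hgrowth : ‖v‖ ≤ lamhat * ‖x‖ * g + Chat) :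
    ‖(1 + s * g)⁻¹ • v + w‖ ≤ lamhat * ‖x‖ * tamedWeight s g + (Chat + ‖w‖) := by
  have htamed : ‖(1 + s * g)⁻¹ • v‖ ≤ lamhat * ‖x‖ * tamedWeight s g + Chat := by
    rw [norm_smul, Real.norm_of_nonneg (by positivity)]
    exact inv_one_add_mul_mul_le hs hg hChat hgrowth
  linarith [norm_add_le ((1 + s * g)⁻¹ • v) w]

lemma sq_mul_norm_tamed_add_sq_le (hs : 0 ≤ s) (hs1 : s ≤ 1) (hg : 0 ≤ g) (hlamhat : 0 ≤ lamhat)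
    (hChat : 0 ≤ Chat) (hK : 0 ≤ K) (hmM : m ^ 2 ≤ M)
    (hgrowth : ‖v‖ ≤ lamhat * ‖x‖ * g + Chat) (hw : ‖w‖ ≤ c + K * (‖x‖ + m)) :
    s ^ 2 * ‖(1 + s * g)⁻¹ • v + w‖ ^ 2 ≤
      s * (lamhat ^ 2 * tamedWeight s g * ‖x‖ ^ 2
        + (lamhat * (1 + 3 * K) + 4 * K ^ 2) * ‖x‖ ^ 2
        + (lamhat * K + 2 * K ^ 2) * M + (lamhat + 4) * (Chat + c) ^ 2) := by
  set D := Chat + c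
  set P := tamedWeight s g
  set u := D + K * (‖x‖ + m)
  have hwu : Chat + ‖w‖ ≤ u := by linarith
  have hu : 0 ≤ u := (by positivity : 0 ≤ Chat + ‖w‖).trans hwu
  have hcross : 2 * ‖x‖ * u ≤ (1 + 3 * K) * ‖x‖ ^ 2 + K * M + D ^ 2 := by
    linarith [two_mul_mul_add_mul_add_le hK hmM D ‖x‖, two_mul_le_add_sq D ‖x‖]
  calc s ^ 2 * ‖(1 + s * g)⁻¹ • v + w‖ ^ 2
      ≤ s ^ 2 * (lamhat * ‖x‖ * P + u) ^ 2 := by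
        gcongr
        exact (norm_tamed_add_le hs hg hChat hgrowth).trans (by gcongr)
    _ ≤ s * ((lamhat * ‖x‖) ^ 2 * P + 2 * (lamhat * ‖x‖) * u + u ^ 2) :=
        sq_mul_add_sq_le hs hs1 (tamedWeight_nonneg hs hg) (mul_tamedWeight_le_one hs hg)
          (by positivity) hu
    _ = s * ((lamhat * ‖x‖) ^ 2 * P + lamhat * (2 * ‖x‖ * u) + u ^ 2) := by ring
    _ ≤ s * ((lamhat * ‖x‖) ^ 2 * P + lamhat * ((1 + 3 * K) * ‖x‖ ^ 2 + K * M + D ^ 2)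
          + (4 * D ^ 2 + 4 * K ^ 2 * ‖x‖ ^ 2 + 2 * K ^ 2 * M)) := by
        gcongr
        exact add_mul_add_sq_le hmM D ‖x‖
    _ = s * (lamhat ^ 2 * P * ‖x‖ ^ 2 + (lamhat * (1 + 3 * K) + 4 * K ^ 2) * ‖x‖ ^ 2
          + (lamhat * K + 2 * K ^ 2) * M + (lamhat + 4) * D ^ 2) := by ring

lemma norm_add_sq_smul_tamed_add_sq_le (hs : 0 ≤ s) (hs1 : s ≤ 1) (hg : 0 ≤ g)
    (hlamhat : 0 ≤ lamhat) (hC : 0 ≤ C) (hChat : 0 ≤ Chat) (hK : 0 ≤ K) (hmM : m ^ 2 ≤ M)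
    (hdiss : ⟪x, v⟫ ≤ -lam * ‖x‖ ^ 2 * g + C) (hgrowth : ‖v‖ ≤ lamhat * ‖x‖ * g + Chat)
    (hw : ‖w‖ ≤ c + K * (‖x‖ + m)) :
    ‖x + s ^ 2 • ((1 + s * g)⁻¹ • v + w)‖ ^ 2 ≤
      ‖x‖ ^ 2 + s ^ 2 *
        (-((2 * lam - s * lamhat ^ 2) * tamedWeight s g * ‖x‖ ^ 2)
          + (3 * K + s * (lamhat * (1 + 3 * K) + 4 * K ^ 2)) * ‖x‖ ^ 2 + 2 * c * ‖x‖
          + (K + s * (lamhat * K + 2 * K ^ 2)) * M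
          + (2 * C + (lamhat + 4) * (Chat + c) ^ 2)) := by
  have hinner := two_mul_inner_tamed_add_le hs hg hC hK hmM hdiss hw
  have hsq := sq_mul_norm_tamed_add_sq_le hs hs1 hg hlamhat hChat hK hmM hgrowth hw
  have hconst : s * ((lamhat + 4) * (Chat + c) ^ 2) ≤ (lamhat + 4) * (Chat + c) ^ 2 :=
    mul_le_of_le_one_left (by positivity) hs1
  set d := (1 + s * g)⁻¹ • v + w
  calc ‖x + s ^ 2 • d‖ ^ 2 = ‖x‖ ^ 2 + s ^ 2 * (2 * ⟪x, d⟫ + s ^ 2 * ‖d‖ ^ 2) := by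
        rw [norm_add_sq_real, real_inner_smul_right, norm_smul, Real.norm_of_nonneg (sq_nonneg s)]
        ring
    _ ≤ _ := by
        gcongr ‖x‖ ^ 2 + s ^ 2 * ?_
        linarith

lemma norm_add_sq_smul_tamed_add_sq_le_of_gap {α γ η ρ R : ℝ} (hs : 0 ≤ s) (hs1 : s ≤ 1)
    (hg : 0 ≤ g) (hlamhat : 0 ≤ lamhat) (hC : 0 ≤ C) (hChat : 0 ≤ Chat) (hK : 0 ≤ K)
    (hα : 0 < α) (hγ : 0 ≤ γ) (hη : 0 < η) (hρ : K * (lamhat + 2 * K) ≤ ρ) (hmM : m ^ 2 ≤ M)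
    (hdiss : ⟪x, v⟫ ≤ -lam * ‖x‖ ^ 2 * g + C) (hgrowth : ‖v‖ ≤ lamhat * ‖x‖ * g + Chat)
    (hlower : R ≤ ‖x‖ → α ≤ g) (hw : ‖w‖ ≤ c + K * (‖x‖ + m))
    (hgap : 4 * K + γ + η + s * (lamhat * (1 + 3 * K) + 4 * K ^ 2 + ρ) ≤
      (2 * lam - s * lamhat ^ 2) * tamedWeight s α) :
    ‖x + s ^ 2 • ((1 + s * g)⁻¹ • v + w)‖ ^ 2 ≤
      (1 - (γ + (K + ρ * s)) * s ^ 2) * ‖x‖ ^ 2 + (K + ρ * s) * s ^ 2 * M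
        + (2 * C + (lamhat + 4) * (Chat + c) ^ 2 + c ^ 2 / η
          + (4 * K + γ + η + (lamhat * (1 + 3 * K) + 4 * K ^ 2 + ρ)) * R ^ 2) * s ^ 2 := by
  have hstep := norm_add_sq_smul_tamed_add_sq_le hs hs1 hg hlamhat hC hChat hK hmM hdiss hgrowth hw
  have hρ0 : 0 ≤ ρ := (by positivity : 0 ≤ K * (lamhat + 2 * K)).trans hρ
  set A := lamhat * (1 + 3 * K) + 4 * K ^ 2 + ρ with hA
  have habsorb := mul_sq_le_mul_tamedWeight_mul_sq_add hs hg hα (by positivity) (norm_nonneg x)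
    hlower hgap
  have hyoung : 2 * c * ‖x‖ ≤ η * ‖x‖ ^ 2 + c ^ 2 / η := two_mul_mul_le_mul_sq_add_sq_div hη c ‖x‖
  have hball : s * (A * R ^ 2) ≤ A * R ^ 2 := mul_le_of_le_one_left (by positivity) hs1
  have hmoment : s * M * (K * (lamhat + 2 * K)) ≤ s * M * ρ :=
    mul_le_mul_of_nonneg_left hρ (mul_nonneg hs ((sq_nonneg m).trans hmM))
  calc _ ≤ _ := hstep
    _ ≤ ‖x‖ ^ 2 + s ^ 2 * (-(γ + (K + ρ * s)) * ‖x‖ ^ 2 + (K + ρ * s) * M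
          + (2 * C + (lamhat + 4) * (Chat + c) ^ 2 + c ^ 2 / η
            + (4 * K + γ + η + A) * R ^ 2)) := by
        gcongr ‖x‖ ^ 2 + s ^ 2 * ?_
        linear_combination habsorb + hyoung + hball + hmoment + s * ‖x‖ ^ 2 * hA
    _ = _ := by ring

end OneStep

theorem stmt_11_general {E : Type*} [NormedAddCommGroup E] [InnerProductSpace ℝ E]
    [CompleteSpace E] [SecondCountableTopology E] [MeasurableSpace E] [BorelSpace E]
    {b1 b0 : E → E} (hb0m : Measurable b0) {g : E → ℝ} {lam C lamhat Chat α R c K γ ρ : ℝ}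
    (hC : 0 < C) (hlamhat : 0 ≤ lamhat) (hChat : 0 ≤ Chat) (hα : 0 < α) (hK : 0 ≤ K)
    (hg : ∀ x, 0 ≤ g x)
    (hdiss : ∀ x, ⟪x, b1 x⟫ ≤ -lam * ‖x‖ ^ 2 * g x + C)
    (hgrowth : ∀ x, ‖b1 x‖ ≤ lamhat * ‖x‖ * g x + Chat)
    (hlower : ∀ x, R ≤ ‖x‖ → α ≤ g x)
    (hb0 : ∀ z, ‖b0 z‖ ≤ c + K * ‖z‖)
    (hγ : 0 ≤ γ) (hγlt : γ < 2 * (α * lam - 2 * K)) (hρ : K * (lamhat + 2 * K) ≤ ρ) :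
    ∃ δstar Cstar : ℝ, 0 < δstar ∧ δstar ≤ 1 ∧ 0 < Cstar ∧
      ∀ δ : ℝ, 0 < δ → δ ≤ δstar →
      ∀ (x : E) (μ : Measure E), IsProbabilityMeasure μ → Integrable (fun y => ‖y‖ ^ 2) μ →
        ‖x + δ • ((1 + √δ * g x)⁻¹ • b1 x + ∫ y, b0 (x - y) ∂μ)‖ ^ 2 ≤
          (1 - (γ + (K + ρ * √δ)) * δ) * ‖x‖ ^ 2
            + (K + ρ * √δ) * δ * (∫ y, ‖y‖ ^ 2 ∂μ) + Cstar * δ := by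
  obtain ⟨η, hη, hηlt⟩ : ∃ η, 0 < η ∧ η < 2 * (α * lam - 2 * K) - γ :=
    exists_between (sub_pos.2 hγlt)
  have hrate : 4 * K + γ + η < 2 * lam * α := by linarith
  have hρ0 : 0 ≤ ρ := (by positivity : 0 ≤ K * (lamhat + 2 * K)).trans hρ
  set A := lamhat * (1 + 3 * K) + 4 * K ^ 2 + ρ
  obtain ⟨δ₀, hδ₀, hδ₀1, hgap⟩ :=
    exists_forall_sqrt_of_eventually (eventually_lt_mul_tamedWeight A (lamhat ^ 2) hrate)
  refine ⟨δ₀, 2 * C + (lamhat + 4) * (Chat + c) ^ 2 + c ^ 2 / η + (4 * K + γ + η + A) * R ^ 2,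
    hδ₀, hδ₀1, by positivity, fun δ hδ hδle x μ _ hμ => ?_⟩
  have hmean : ‖∫ y, b0 (x - y) ∂μ‖ ≤ c + K * (‖x‖ + ∫ y, ‖y‖ ∂μ) :=
    norm_integral_comp_sub_le_of_linear_growth hK hb0 (integrable_norm_of_integrable_norm_sq hμ) x
  have hstep := norm_add_sq_smul_tamed_add_sq_le_of_gap (Real.sqrt_nonneg δ)
    (Real.sqrt_le_one.2 (hδle.trans hδ₀1)) (hg x) hlamhat hC.le hChat hK hα hγ hη hρ
    (sq_integral_norm_le_integral_norm_sq hμ) (hdiss x) (hgrowth x) (hlower x) hmean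
    (hgap δ hδ hδle).le
  rwa [Real.sq_sqrt hδ.le] at hstep

/- One-step dissipativity of the tamed Euler drift step (Lemma 4.2): there are
   δ* ∈ (0,1] and C* > 0 such that for all δ ∈ (0, δ*], x, and probability
   measures μ with finite second moment,
   |x + δ·(b1^δ(x) + (b0 ∗ μ)(x))|² ≤ (1 − (κ/4 + β_δ)δ)|x|² + β_δ·δ·μ(|·|²) + C*·δ,
   where b1^δ(x) = b1(x)/(1 + √δ·‖∇b1(x)‖_HS), β_δ = K + ρ√δ, ρ = 4K(K + λ̂_{b1}). -/
theorem stmt_11 (d : ℕ) (hd : 1 ≤ d)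
    (b1 b0 : EuclideanSpace ℝ (Fin d) → EuclideanSpace ℝ (Fin d))
    (hb1C1 : ContDiff ℝ 1 b1) (hb0m : Measurable b0)
    (lamb1 Cb1 lamhatb1 Chatb1 α Rα K κ ρ : ℝ)
    (hlamb1 : 0 < lamb1) (hCb1 : 0 < Cb1) (hlamhatb1 : 0 < lamhatb1)
    (hChatb1 : 0 < Chatb1) (hα : 0 < α) (hRα : 0 < Rα) (hK : 0 ≤ K)
    (hdiss : ∀ x : EuclideanSpace ℝ (Fin d),
      ⟪x, b1 x⟫ ≤ -lamb1 * ‖x‖ ^ 2 * jacobianHSNorm b1 x + Cb1)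
    (hgrowth : ∀ x : EuclideanSpace ℝ (Fin d),
      ‖b1 x‖ ≤ lamhatb1 * ‖x‖ * jacobianHSNorm b1 x + Chatb1)
    (hlower : ∀ x : EuclideanSpace ℝ (Fin d), Rα ≤ ‖x‖ → α ≤ jacobianHSNorm b1 x)
    (hB2 : ∀ x y : EuclideanSpace ℝ (Fin d), ‖b0 x - b0 y‖ ≤ K * ‖x - y‖)
    (hκ : κ = α * lamb1 - 2 * K) (hκpos : 0 < κ)
    (hρ : ρ = 4 * K * (K + lamhatb1)) :
    ∃ δstar Cstar : ℝ, 0 < δstar ∧ δstar ≤ 1 ∧ 0 < Cstar ∧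
      ∀ δ : ℝ, 0 < δ → δ ≤ δstar →
      ∀ (x : EuclideanSpace ℝ (Fin d)) (μ : Measure (EuclideanSpace ℝ (Fin d))),
        IsProbabilityMeasure μ → Integrable (fun y => ‖y‖ ^ 2) μ →
        ‖x + δ • ((1 + Real.sqrt δ * jacobianHSNorm b1 x)⁻¹ • b1 x
            + ∫ y, b0 (x - y) ∂μ)‖ ^ 2 ≤
          (1 - (κ / 4 + (K + ρ * Real.sqrt δ)) * δ) * ‖x‖ ^ 2
            + (K + ρ * Real.sqrt δ) * δ * (∫ y, ‖y‖ ^ 2 ∂μ) + Cstar * δ := by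
  have hb0 (z : EuclideanSpace ℝ (Fin d)) : ‖b0 z‖ ≤ ‖b0 0‖ + K * ‖z‖ := by
    simpa using (norm_le_norm_add_norm_sub' (b0 z) (b0 0)).trans
      (add_le_add_right (hB2 z 0) ‖b0 0‖)
  exact stmt_11_general hb0m hCb1 hlamhatb1.le hChatb1.le hα hK (fun x => Real.sqrt_nonneg _)
    hdiss hgrowth hlower hb0 (by positivity) (by linarith) (by nlinarith)
end
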